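/- Let n ≥ 2 and let 1 ≤ k ≤ n be an integer. Let κ ∈ Γ_k ⊂ ℝ^n and let κ_1 be a largest entry of κ (κ_1 ≥ κ_j for all j). Then κ_1·σ_{k−1}(κ|1) ≥ (k/n)·σ_k(κ). -/

import Mathlib

/-!
Write `x = κ_1` and let `s_j` be the elementary symmetric polynomials of the remaining `n - 1`
entries, so that `σ_k = x s_{k-1} + s_k`. The claim is `k s_k ≤ (n - k) x s_{k-1}`.

* If `s_k ≤ 0`, then `x s_{k-1} ≥ σ_k > 0` and `k / n ≤ 1` suffices.
* If `s_k > 0`, then the truncated vector `(κ|1)` is itself in the cone `Γ_k`, so all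
  `σ_{k-1}(κ|1i)` are positive. Since `κ_i ≤ x`,
  `k s_k = ∑ κ_i σ_{k-1}(κ|1i) ≤ x ∑ σ_{k-1}(κ|1i) = x (n - k) s_{k-1}`.

Both uses of the cone rest on `esymNat_erase_pos`: deleting an entry sends `Γ_{m+1}` to `Γ_m`.
It follows from the inequality `s_m s_{m+2} ≤ s_{m+1}²` for arbitrary real entries, a weak form of
Newton's inequality. The latter comes from `p p'' ≤ p'²` at `0`, valid for every real-rooted `p`,
applied to the successive derivatives of `∏ (X + κ_i)`, which are real-rooted by Rolle's theorem.
-/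

open Finset

/-- The `m`-th elementary symmetric polynomial of the entries of `x` indexed by `A`,
with the convention that it vanishes for negative `m` (and for `m` larger than `A.card`). -/
noncomputable def esymmOn {n : ℕ} (A : Finset (Fin n)) (m : ℤ) (x : Fin n → ℝ) : ℝ :=
  if 0 ≤ m then ∑ s ∈ Finset.powersetCard m.toNat A, ∏ i ∈ s, x i else 0

/-- `esym m x` is σ_m(x), the `m`-th elementary symmetric polynomial of `x`. -/
noncomputable def esym {n : ℕ} (m : ℤ) (x : Fin n → ℝ) : ℝ := esymmOn Finset.univ m x

/-- `esymD1 m x i` is σ_m(x|i), the `m`-th elementary symmetric polynomial of the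
entries of `x` with the `i`-th entry deleted. -/
noncomputable def esymD1 {n : ℕ} (m : ℤ) (x : Fin n → ℝ) (i : Fin n) : ℝ :=
  esymmOn (Finset.univ.erase i) m x

/-- `esymD2 m x i j` is σ_m(x|ij), the `m`-th elementary symmetric polynomial of the
entries of `x` with the `i`-th and `j`-th entries deleted. -/
noncomputable def esymD2 {n : ℕ} (m : ℤ) (x : Fin n → ℝ) (i j : Fin n) : ℝ :=
  esymmOn ((Finset.univ.erase i).erase j) m x

/-- The Garding cone Γ_k. -/
def GardingCone (n k : ℕ) : Set (Fin n → ℝ) :=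
  {x | ∀ m : ℕ, 1 ≤ m → m ≤ k → 0 < esym (m : ℤ) x}

/-- `(σ_m)_ξ(x)`, the derivative of σ_m at `x` in the diagonal direction `ξ`. -/
noncomputable def esymDeriv {n : ℕ} (m : ℤ) (x ξ : Fin n → ℝ) : ℝ :=
  ∑ p, esymD1 (m - 1) x p * ξ p

/-- The divided difference `g(s,t)` of the exponential function. -/
noncomputable def expDD (s t : ℝ) : ℝ :=
  if s = t then Real.exp t else (Real.exp s - Real.exp t) / (s - t)

open Polynomial in
/-- Rolle's theorem: the derivative of a real-rooted polynomial is real-rooted. -/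
theorem splits_derivative_real {p : ℝ[X]} (hp : p.Splits) : (derivative p).Splits := by
  rw [splits_iff_card_roots] at hp ⊢
  have h1 := card_roots_le_derivative p
  have h2 := card_roots' (derivative p)
  have h3 := natDegree_derivative_le p
  by_cases h0 : p.natDegree = 0
  · have h4 : derivative p = 0 := derivative_of_natDegree_zero h0
    simp [h4]
  · omega

open Polynomial in
/-- Laguerre's inequality `p p'' ≤ p'²`, by induction on the number of linear factors. -/
theorem eval_laguerre {p : ℝ[X]} (hp : p.Splits) (x : ℝ) :
    p.eval x * (derivative (derivative p)).eval x ≤ (derivative p).eval x ^ 2 := by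
  obtain ⟨s, hs⟩ := splits_iff_exists_multiset.mp hp
  have key : ∀ (t : Multiset ℝ) (q : ℝ[X]), q = (t.map fun a => X - C a).prod →
      q.eval x * (derivative (derivative q)).eval x ≤ (derivative q).eval x ^ 2 := by
    intro t
    induction t using Multiset.induction_on with
    | empty => rintro q rfl; simp
    | cons a t ih =>
      rintro q rfl
      have h := ih _ rfl
      rw [Multiset.map_cons, Multiset.prod_cons]
      generalize (t.map fun a => X - C a).prod = r at h ⊢
      simp only [derivative_mul, derivative_add, derivative_sub, derivative_X, derivative_C,
        eval_add, eval_mul, eval_sub, eval_X, eval_C, sub_zero, one_mul]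
      -- the difference of the two sides is `r² + (x - a)² (r'² - r r'')`
      nlinarith [mul_le_mul_of_nonneg_left h (sq_nonneg (x - a)), sq_nonneg (r.eval x)]
  have h := key s _ rfl
  rw [hs]
  simp only [derivative_C_mul, eval_C_mul]
  nlinarith [mul_le_mul_of_nonneg_left h (sq_nonneg p.leadingCoeff)]

open Polynomial in
/-- Newton's inequality for coefficients of a real-rooted polynomial, with the constant that is
stable under passing to the derivative (it does not involve the degree). -/
theorem coeff_newton (j : ℕ) : ∀ {p : ℝ[X]}, p.Splits →
    ((j : ℝ) + 2) * (p.coeff j * p.coeff (j + 2)) ≤ ((j : ℝ) + 1) * p.coeff (j + 1) ^ 2 := by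
  induction j with
  | zero =>
    intro p hp
    have h := eval_laguerre hp 0
    simp only [← coeff_zero_eq_eval_zero, coeff_derivative] at h
    norm_num at h ⊢
    linarith
  | succ j ih =>
    intro p hp
    have h := ih (splits_derivative_real hp)
    simp only [coeff_derivative] at h
    push_cast at h ⊢
    have hpos : 0 < ((j : ℝ) + 1) * (j + 2) := by positivity
    refine le_of_mul_le_mul_left ?_ hpos
    calc _ = _ := ?_
      _ ≤ _ := h
      _ = _ := ?_
    · ring
    · ring

/-- The elementary symmetric polynomial of degree `m` of the entries of `x` indexed by `A`, with a
natural number as degree. -/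
noncomputable def esymNat {ι : Type*} (A : Finset ι) (m : ℕ) (x : ι → ℝ) : ℝ :=
  ∑ s ∈ Finset.powersetCard m A, ∏ i ∈ s, x i

section

variable {ι : Type*}

theorem esymNat_zero (A : Finset ι) (x : ι → ℝ) : esymNat A 0 x = 1 := by
  simp [esymNat]

theorem esymNat_newton (A : Finset ι) (m : ℕ) (x : ι → ℝ) :
    esymNat A m x * esymNat A (m + 2) x ≤ esymNat A (m + 1) x ^ 2 := by
  by_cases hm : m + 2 ≤ A.card
  · obtain ⟨j, hj⟩ : ∃ j, A.card = m + 2 + j := ⟨A.card - (m + 2), by omega⟩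
    have hs : (∏ i ∈ A, (Polynomial.X + Polynomial.C (x i))).Splits :=
      Polynomial.Splits.prod fun i _ => Polynomial.Splits.X_add_C (x i)
    have h := coeff_newton j hs
    rw [Finset.prod_X_add_C_coeff _ _ (by omega), Finset.prod_X_add_C_coeff _ _ (by omega),
      Finset.prod_X_add_C_coeff _ _ (by omega),
      show A.card - j = m + 2 by omega, show A.card - (j + 2) = m by omega,
      show A.card - (j + 1) = m + 1 by omega] at h
    change ((j : ℝ) + 2) * (esymNat A (m + 2) x * esymNat A m x)
      ≤ ((j : ℝ) + 1) * esymNat A (m + 1) x ^ 2 at h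
    have hj0 : (0 : ℝ) < (j : ℝ) + 2 := by positivity
    refine le_of_mul_le_mul_left ?_ hj0
    nlinarith [sq_nonneg (esymNat A (m + 1) x)]
  · have h0 : esymNat A (m + 2) x = 0 := by
      rw [esymNat, Finset.powersetCard_eq_empty.mpr (by omega), Finset.sum_empty]
    rw [h0, mul_zero]
    exact sq_nonneg _

variable [DecidableEq ι]

theorem esymNat_insert {a : ι} {A : Finset ι} (ha : a ∉ A) (m : ℕ) (x : ι → ℝ) :
    esymNat (insert a A) (m + 1) x = esymNat A (m + 1) x + x a * esymNat A m x := by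
  have hmem : ∀ s ∈ Finset.powersetCard m A, a ∉ s := fun s hs h =>
    ha ((Finset.mem_powersetCard.mp hs).1 h)
  unfold esymNat
  rw [Finset.powersetCard_succ_insert ha, Finset.sum_union, Finset.sum_image, Finset.mul_sum]
  · congr 1
    exact Finset.sum_congr rfl fun s hs => Finset.prod_insert (hmem s hs)
  · intro s hs t ht hst
    rw [← Finset.erase_insert (hmem s hs), ← Finset.erase_insert (hmem t ht), hst]
  · rw [Finset.disjoint_left]
    intro s hs hs'
    obtain ⟨t, -, rfl⟩ := Finset.mem_image.mp hs'
    exact ha ((Finset.mem_powersetCard.mp hs).1 (Finset.mem_insert_self a t))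

theorem esymNat_erase {a : ι} {A : Finset ι} (ha : a ∈ A) (m : ℕ) (x : ι → ℝ) :
    esymNat A (m + 1) x = esymNat (A.erase a) (m + 1) x + x a * esymNat (A.erase a) m x := by
  conv_lhs => rw [← Finset.insert_erase ha]
  exact esymNat_insert (Finset.notMem_erase a A) m x

/-- Euler's identity for the homogeneous polynomial `σ_{m+1}`. -/
theorem sum_mul_esymNat_erase (A : Finset ι) (m : ℕ) (x : ι → ℝ) :
    ∑ i ∈ A, x i * esymNat (A.erase i) m x = ((m : ℝ) + 1) * esymNat A (m + 1) x := by
  induction A using Finset.induction_on generalizing m with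
  | empty =>
    rw [esymNat, Finset.powersetCard_eq_empty.mpr (by simp)]
    simp
  | insert a B ha ih =>
    have hne : ∀ i ∈ B, (insert a B).erase i = insert a (B.erase i) := fun i hi =>
      Finset.erase_insert_of_ne (fun h => ha (h ▸ hi))
    have hna : ∀ i, a ∉ B.erase i := fun i h => ha (Finset.mem_of_mem_erase h)
    rw [Finset.sum_insert ha, Finset.erase_insert ha, esymNat_insert ha]
    cases m with
    | zero =>
      have h := ih 0
      simp only [esymNat_zero, mul_one] at h ⊢
      rw [h]
      push_cast
      ring
    | succ m =>
      have h : ∑ i ∈ B, x i * esymNat ((insert a B).erase i) (m + 1) x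
          = ∑ i ∈ B, x i * esymNat (B.erase i) (m + 1) x
            + x a * ∑ i ∈ B, x i * esymNat (B.erase i) m x := by
        rw [Finset.mul_sum, ← Finset.sum_add_distrib]
        refine Finset.sum_congr rfl fun i hi => ?_
        rw [hne i hi, esymNat_insert (hna i)]
        ring
      rw [h, ih, ih]
      push_cast
      ring

theorem sum_esymNat_erase (A : Finset ι) (m : ℕ) (x : ι → ℝ) :
    ∑ i ∈ A, esymNat (A.erase i) m x = ((A.card : ℝ) - m) * esymNat A m x := by
  cases m with
  | zero => simp [esymNat_zero]
  | succ m =>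
    have h : ∑ i ∈ A, esymNat A (m + 1) x = ∑ i ∈ A, esymNat (A.erase i) (m + 1) x
        + ∑ i ∈ A, x i * esymNat (A.erase i) m x := by
      rw [← Finset.sum_add_distrib]
      exact Finset.sum_congr rfl fun i hi => esymNat_erase hi m x
    rw [sum_mul_esymNat_erase, Finset.sum_const, nsmul_eq_mul] at h
    push_cast
    linarith

/-- If `x` lies in `Γ_{m+1}`, then `σ_m` stays positive after deleting one entry; applied to all
smaller degrees, this says that the deletion maps `Γ_{m+1}` into `Γ_m`. In the induction, if `σ_{m+1}` of the shortened vector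
were nonpositive while `σ_m` of it is positive, positivity of `σ_{m+1}` and `σ_{m+2}` of the full
vector would contradict `esymNat_newton`. -/
theorem esymNat_erase_pos {A : Finset ι} {x : ι → ℝ} {i : ι} (hi : i ∈ A) (m : ℕ)
    (h : ∀ j ≤ m + 1, 0 < esymNat A j x) : 0 < esymNat (A.erase i) m x := by
  induction m with
  | zero => rw [esymNat_zero]; exact one_pos
  | succ m ih =>
    have hm := ih fun j hj => h j (by omega)
    have h1 := h (m + 1) (by omega)
    have h2 := h (m + 2) (by omega)
    rw [esymNat_erase hi] at h1 h2
    have hN := esymNat_newton (A.erase i) m x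
    by_contra! hneg
    -- with `a = s_m`, `b = s_{m+1} ≤ 0`, `c = s_{m+2}`: `a c > -(x_i a) b ≥ b²`
    generalize esymNat (A.erase i) m x = a at *
    generalize esymNat (A.erase i) (m + 1) x = b at *
    generalize esymNat (A.erase i) (m + 2) x = c at *
    nlinarith [mul_pos hm h2, mul_nonneg (neg_nonneg.mpr hneg) h1.le]

end

theorem esymmOn_natCast {n : ℕ} (A : Finset (Fin n)) (m : ℕ) (x : Fin n → ℝ) :
    esymmOn A (m : ℤ) x = esymNat A m x := by
  simp [esymmOn, esymNat]

/-- For `κ` in the Garding cone `Γ_k` with largest entry `κ_1`,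
one has `κ_1 σ_{k-1}(κ|1) ≥ (k/n) σ_k(κ)`. -/
theorem largest_entry_ineq (n k : ℕ) (hn : 2 ≤ n) (hk1 : 1 ≤ k) (hkn : k ≤ n)
    (κ : Fin n → ℝ) (hκ : κ ∈ GardingCone n k)
    (hmax : ∀ j : Fin n, κ j ≤ κ ⟨0, by omega⟩) :
    (k : ℝ) / (n : ℝ) * esym (k : ℤ) κ
      ≤ κ ⟨0, by omega⟩ * esymD1 ((k : ℤ) - 1) κ ⟨0, by omega⟩ := by
  obtain ⟨m, rfl⟩ : ∃ m, k = m + 1 := ⟨k - 1, by omega⟩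
  generalize (⟨0, by omega⟩ : Fin n) = a at hmax ⊢
  have hcast : (((m + 1 : ℕ) : ℤ) - 1) = (m : ℤ) := by push_cast; ring
  rw [hcast, esym, esymD1, esymmOn_natCast, esymmOn_natCast]
  have hA : ∀ j ≤ m + 1, 0 < esymNat Finset.univ j κ := by
    intro j hj
    rcases Nat.eq_zero_or_pos j with rfl | hj0
    · rw [esymNat_zero]; exact one_pos
    · rw [← esymmOn_natCast]; exact hκ j hj0 hj
  have ha : a ∈ (Finset.univ : Finset (Fin n)) := Finset.mem_univ a
  have hB : ∀ j ≤ m, 0 < esymNat (Finset.univ.erase a) j κ := fun j hj =>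
    esymNat_erase_pos ha j fun l hl => hA l (by omega)
  have hσ := hA (m + 1) le_rfl
  have hrec := esymNat_erase ha m κ
  have hn0 : (0 : ℝ) < n := by exact_mod_cast (by omega : 0 < n)
  have hkn' : ((m + 1 : ℕ) : ℝ) ≤ n := by exact_mod_cast hkn
  rcases le_or_gt (esymNat (Finset.univ.erase a) (m + 1) κ) 0 with hs | hs
  · have h1 : ((m + 1 : ℕ) : ℝ) / n ≤ 1 := (div_le_one hn0).mpr hkn'
    have h2 := mul_le_mul_of_nonneg_right h1 hσ.le
    linarith
  · have hB' : ∀ j ≤ m + 1, 0 < esymNat (Finset.univ.erase a) j κ := by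
      intro j hj
      rcases Nat.lt_or_ge m j with hj' | hj'
      · obtain rfl : j = m + 1 := by omega
        exact hs
      · exact hB j hj'
    have hle : ∑ i ∈ Finset.univ.erase a, κ i * esymNat ((Finset.univ.erase a).erase i) m κ
        ≤ ∑ i ∈ Finset.univ.erase a, κ a * esymNat ((Finset.univ.erase a).erase i) m κ :=
      Finset.sum_le_sum fun i hi =>
        mul_le_mul_of_nonneg_right (hmax i) (esymNat_erase_pos hi m hB').le
    rw [← Finset.mul_sum, sum_mul_esymNat_erase, sum_esymNat_erase,
      Finset.card_erase_of_mem ha, Finset.card_univ, Fintype.card_fin,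
      Nat.cast_sub (by omega)] at hle
    rw [div_mul_eq_mul_div, div_le_iff₀ hn0, hrec]
    push_cast at hle ⊢
    linarith
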